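/- For every f ∈ F_(C,β) and every ξ > 0 there exists f₂ ∈ F_(C,β) such that for each fixed x ∈ [0,1] the map y ↦ f₂(x,y) is C² on [0,1], and d_α(f₂, f) < ξ/3. In particular, the elements of F_(C,β) that are C² in the second variable are dense in (F_(C,β), d_α). -/

import Mathlib

open MeasureTheory Set Filter Topology
open scoped ENNReal

noncomputable section

/-- The unit square `M = [0,1]²`. -/
def MSq : Set (ℝ × ℝ) := unitInterval ×ˢ unitInterval

/-- Lower `(C,γ)`-bi-Hölder bound in the second variable. -/
def BiHolderLower (C γ : ℝ) (f : ℝ → ℝ → ℝ) : Prop :=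
  ∀ x ∈ unitInterval, ∀ y₁ ∈ unitInterval, ∀ y₂ ∈ unitInterval, y₁ ≠ y₂ →
    C⁻¹ * |y₂ - y₁| ^ (1 / γ) ≤ |f x y₂ - f x y₁|

/-- Upper `(C,γ)`-Hölder bound in the second variable. -/
def BiHolderUpper (C γ : ℝ) (f : ℝ → ℝ → ℝ) : Prop :=
  ∀ x ∈ unitInterval, ∀ y₁ ∈ unitInterval, ∀ y₂ ∈ unitInterval, y₁ ≠ y₂ →
    |f x y₂ - f x y₁| ≤ C * |y₂ - y₁| ^ γ

/-- Membership in the space `F_(C,γ)`: conditions (i)–(iv); `fx` plays the role of `∂f/∂x`. -/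
structure IsFol (C γ : ℝ) (f fx : ℝ → ℝ → ℝ) : Prop where
  mapsTo : ∀ x ∈ unitInterval, ∀ y ∈ unitInterval, f x y ∈ unitInterval
  hasDeriv : ∀ y ∈ unitInterval, ∀ x ∈ unitInterval,
    HasDerivWithinAt (fun x' => f x' y) (fx x y) unitInterval x
  derivCont : ContinuousOn (fun p : ℝ × ℝ => fx p.1 p.2) MSq
  eq_id : ∀ y ∈ unitInterval, f 0 y = y
  eq_bot : ∀ x ∈ unitInterval, f x 0 = 0
  eq_top : ∀ x ∈ unitInterval, f x 1 = 1
  lower : BiHolderLower C γ f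
  upper : BiHolderUpper C γ f

/-- The space `F_(C,γ)`. -/
structure Fol (C γ : ℝ) where
  f : ℝ → ℝ → ℝ
  fx : ℝ → ℝ → ℝ
  isFol : IsFol C γ f fx

/-- The inverse of `y ↦ f x y` on `[0,1]`, i.e. the holonomy `h^f_{x,0}`. -/
def hinv (f : ℝ → ℝ → ℝ) (x : ℝ) : ℝ → ℝ := Function.invFunOn (f x) unitInterval

/-- The `C⁰` distance over the square. -/
def C0dist (u v : ℝ → ℝ → ℝ) : ℝ :=
  sSup {r | ∃ x ∈ unitInterval, ∃ y ∈ unitInterval, r = |u x y - v x y|}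

/-- The `α`-Hölder seminorm of the difference `h - k` on `[0,1]`. -/
def holDist (α : ℝ) (h k : ℝ → ℝ) : ℝ :=
  sSup {r | ∃ y₁ ∈ unitInterval, ∃ y₂ ∈ unitInterval, y₁ ≠ y₂ ∧
    r = |(h y₂ - k y₂) - (h y₁ - k y₁)| / |y₂ - y₁| ^ α}

/-- The distance `d_α`, on raw data `(f, ∂f/∂x)`, `(g, ∂g/∂x)`. -/
def dalpha (α : ℝ) (f fx g gx : ℝ → ℝ → ℝ) : ℝ :=
  C0dist f g + C0dist fx gx +
    sSup {r | ∃ x ∈ unitInterval,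
      r = max (holDist α (f x) (g x)) (holDist α (hinv f x) (hinv g x))}

/-- The distance `d_α` on `F_(C,γ)`. -/
def dalphaF {C γ : ℝ} (α : ℝ) (F G : Fol C γ) : ℝ := dalpha α F.f F.fx G.f G.fx

/-- Openness with respect to a distance function. -/
def IsOpenWrt {X : Type*} (d : X → X → ℝ) (s : Set X) : Prop :=
  ∀ f ∈ s, ∃ ε > 0, ∀ g, d g f < ε → g ∈ s

/-- Density with respect to a distance function. -/
def IsDenseWrt {X : Type*} (d : X → X → ℝ) (s : Set X) : Prop :=
  ∀ f : X, ∀ ε > 0, ∃ g ∈ s, d g f < ε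

/-- Lebesgue measure `μ` on the unit square `M`. -/
def muM : Measure (ℝ × ℝ) := volume.restrict MSq

/-- The projection `π_f(x,z) = f(x,·)⁻¹(z)` along the leaves. -/
def projF (f : ℝ → ℝ → ℝ) : ℝ × ℝ → ℝ := fun p => hinv f p.1 p.2

/-- The quotient measure `μ̂ = (π_f)_* μ`. -/
def quotM {C γ : ℝ} (F : Fol C γ) : Measure ℝ := muM.map (projF F.f)

/-- The leaf `L_y = {(x, f(x,y)) : x ∈ [0,1]}`. -/
def Leaf {C γ : ℝ} (F : Fol C γ) (y : ℝ) : Set (ℝ × ℝ) :=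
  (fun x => (x, F.f x y)) '' unitInterval

/-- `(ν_y)` is a Rokhlin disintegration of Lebesgue measure on the square w.r.t. `π_f`. -/
def IsDisint {C γ : ℝ} (F : Fol C γ) (ν : ℝ → Measure (ℝ × ℝ)) : Prop :=
  (∀ y, IsProbabilityMeasure (ν y)) ∧
  (∀ E : Set (ℝ × ℝ), MeasurableSet E → Measurable fun y => ν y E) ∧
  (∀ᵐ y ∂quotM F, ν y (Leaf F y) = 1) ∧
  (∀ E : Set (ℝ × ℝ), MeasurableSet E → muM E = ∫⁻ y, ν y E ∂quotM F)

/-- The element `P_i` of the partition `P_{f,n}`. -/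
def Pelt (f : ℝ → ℝ → ℝ) (n i : ℕ) : Set (ℝ × ℝ) :=
  {p | p.1 ∈ unitInterval ∧ f p.1 ((i : ℝ) / 2 ^ n) ≤ p.2 ∧ p.2 < f p.1 (((i : ℝ) + 1) / 2 ^ n)}

/-- `Ĩ = [b₁,b₂] × [0,1]`. -/
def Itilde (b₁ b₂ : ℝ) : Set (ℝ × ℝ) := Icc b₁ b₂ ×ˢ unitInterval

/-- The set `A_{n,m,I}`. -/
def Aset (C γ : ℝ) (n m : ℕ) (b₁ b₂ : ℝ) : Set (Fol C γ) :=
  {F | ∀ i < 2 ^ n,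
    muM (Pelt F.f n i ∩ Itilde b₁ b₂) / muM (Pelt F.f n i) < 1 / (m : ℝ≥0∞) ∨
    1 - 1 / (m : ℝ≥0∞) < muM (Pelt F.f n i ∩ Itilde b₁ b₂) / muM (Pelt F.f n i)}

/-- The set `B_{m,I}`. -/
def Bset (C γ : ℝ) (m : ℕ) (b₁ b₂ : ℝ) : Set (Fol C γ) := ⋃ n : ℕ, Aset C γ n m b₁ b₂

/-- The leaf measure `λ_y`: pushforward of 1-dimensional Lebesgue measure on `[0,1]`
under `x ↦ (x, f(x,y))`. -/
def leafMeas {C γ : ℝ} (F : Fol C γ) (y : ℝ) : Measure (ℝ × ℝ) :=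
  (volume.restrict unitInterval).map fun x => (x, F.f x y)

/-!
Apply Bernstein polynomials in the variable `y`. Drawing `n` uniform points of `[0, 1]` and
counting those below `y₁` and those below `y₂` couples the binomial laws at `y₁ ≤ y₂`, so an
increment of the Bernstein polynomial of `g` is an average of increments of `g` over intervals of
mean length `y₂ - y₁`. By Jensen's inequality, convex lower bounds and concave upper bounds for the
increments, such as the two bi-Hölder bounds, survive with the same constants. Since
`f(0, y) = y`, uniform closeness of the `x`-derivatives forces closeness of the functions, then of
the inverses by the lower bi-Hölder bound, and interpolation with the uniform `β`-Hölder bounds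
upgrades both to closeness in the `α`-Hölder seminorm.
-/

open scoped Finset Polynomial

section Trinomial

variable {ι R : Type*} [Fintype ι] [CommSemiring R]

/-- The trinomial weight of a disjoint pair, when the three results of each trial have weights
`a`, `b` and `c`; no normalization `a + b + c = 1` is imposed. -/
def trinomialWeight (a b c : R) (p : Finset ι × Finset ι) : R :=
  a ^ #p.1 * (b ^ #p.2 * c ^ (Fintype.card ι - #p.1 - #p.2))

lemma trinomialWeight_nonneg [PartialOrder R] [IsOrderedRing R] {a b c : R} (ha : 0 ≤ a)
    (hb : 0 ≤ b) (hc : 0 ≤ c) (p : Finset ι × Finset ι) : 0 ≤ trinomialWeight a b c p :=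
  mul_nonneg (pow_nonneg ha _) (mul_nonneg (pow_nonneg hb _) (pow_nonneg hc _))

variable [DecidableEq ι]

variable (ι) in
/-- The pairs of disjoint subsets of `ι`: the outcomes of a family of three-way trials indexed by
`ι`, recorded by the set of trials with the first result and the set with the second. -/
def disjointPairs : Finset (Finset ι × Finset ι) := {p | Disjoint p.1 p.2}

lemma mem_disjointPairs {p : Finset ι × Finset ι} : p ∈ disjointPairs ι ↔ Disjoint p.1 p.2 := by
  simp only [disjointPairs, Finset.mem_filter_univ]

lemma card_add_card_le_of_mem_disjointPairs {p : Finset ι × Finset ι} (hp : p ∈ disjointPairs ι) :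
    #p.1 + #p.2 ≤ Fintype.card ι := by
  rw [← Finset.card_union_of_disjoint (mem_disjointPairs.1 hp)]
  exact Finset.card_le_univ _

lemma sum_trinomialWeight_mul_fst (a b c : R) (φ : ℕ → R) :
    ∑ p ∈ disjointPairs ι, trinomialWeight a b c p * φ #p.1 =
      ∑ k ∈ Finset.range (Fintype.card ι + 1),
        (Fintype.card ι).choose k * (a ^ k * (b + c) ^ (Fintype.card ι - k) * φ k) := by
  have sum_snd (S : Finset ι) : ∑ V ∈ Sᶜ.powerset, trinomialWeight a b c (S, V) * φ #S =
      a ^ #S * (b + c) ^ (Fintype.card ι - #S) * φ #S := by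
    rw [← Finset.sum_mul, ← Finset.card_compl, ← Finset.sum_pow_mul_eq_add_pow, Finset.mul_sum]
    simp only [trinomialWeight, Finset.card_compl]
  rw [Finset.sum_finset_product _ Finset.univ.powerset (fun S => Sᶜ.powerset)
      fun p => by simp [mem_disjointPairs, Finset.subset_compl_iff_disjoint_left],
    Finset.sum_congr rfl fun S _ => sum_snd S,
    Finset.sum_powerset_apply_card fun k => a ^ k * (b + c) ^ (Fintype.card ι - k) * φ k]
  simp only [nsmul_eq_mul, Finset.card_univ]

lemma sum_trinomialWeight_mul_snd (a b c : R) (φ : ℕ → R) :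
    ∑ p ∈ disjointPairs ι, trinomialWeight a b c p * φ #p.2 =
      ∑ k ∈ Finset.range (Fintype.card ι + 1),
        (Fintype.card ι).choose k * (b ^ k * (a + c) ^ (Fintype.card ι - k) * φ k) := by
  rw [← sum_trinomialWeight_mul_fst (ι := ι)]
  refine Finset.sum_equiv (Equiv.prodComm _ _)
    (fun p => by simp [mem_disjointPairs, disjoint_comm]) fun p _ => ?_
  simp only [trinomialWeight, Equiv.prodComm_apply, Prod.fst_swap, Prod.snd_swap,
    Nat.sub_right_comm _ #p.1, mul_left_comm (a ^ _)]

lemma sum_trinomialWeight (a b c : R) :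
    ∑ p ∈ disjointPairs ι, trinomialWeight a b c p = (a + b + c) ^ Fintype.card ι := by
  have := sum_trinomialWeight_mul_fst (ι := ι) a b c fun _ => 1
  simpa only [mul_one, add_assoc, add_pow a (b + c), mul_comm] using this

end Trinomial

section Bernstein

/-- The `n`-th Bernstein polynomial approximation of `g` on `[0, 1]`. Unlike
`bernsteinApproximation` it is a polynomial, and `g` is a function on all of `ℝ`, of which only
the values at the nodes `k / n` matter. -/
def bernsteinApprox (n : ℕ) (g : ℝ → ℝ) : ℝ[X] :=
  ∑ k ∈ Finset.range (n + 1), Polynomial.C (g (k / n)) * bernsteinPolynomial ℝ n k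

lemma natCast_div_mem_unitInterval {k n : ℕ} (h : k ≤ n) : (k / n : ℝ) ∈ unitInterval :=
  unitInterval.div_mem k.cast_nonneg n.cast_nonneg (Nat.cast_le.2 h)

lemma eval_bernsteinApprox (n : ℕ) (g : ℝ → ℝ) (y : ℝ) :
    (bernsteinApprox n g).eval y =
      ∑ k ∈ Finset.range (n + 1), n.choose k * (y ^ k * (1 - y) ^ (n - k) * g (k / n)) := by
  simp only [bernsteinApprox, bernsteinPolynomial, Polynomial.eval_finsetSum, Polynomial.eval_mul,
    Polynomial.eval_C, Polynomial.eval_natCast, Polynomial.eval_pow, Polynomial.eval_X,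
    Polynomial.eval_sub, Polynomial.eval_one]
  exact Finset.sum_congr rfl fun k _ => by ring

lemma bernsteinApprox_congr {g h : ℝ → ℝ} (hgh : EqOn g h unitInterval) (n : ℕ) :
    bernsteinApprox n g = bernsteinApprox n h :=
  Finset.sum_congr rfl fun k hk => by
    rw [hgh (natCast_div_mem_unitInterval (Finset.mem_range_succ_iff.1 hk))]

lemma bernsteinApprox_neg (n : ℕ) (g : ℝ → ℝ) : bernsteinApprox n (-g) = -bernsteinApprox n g := by
  simp only [bernsteinApprox, Pi.neg_apply, Polynomial.C_neg, neg_mul, Finset.sum_neg_distrib]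

lemma bernsteinApprox_id {n : ℕ} (hn : n ≠ 0) : bernsteinApprox n id = Polynomial.X := by
  have hn' : (n : ℝ) ≠ 0 := Nat.cast_ne_zero.2 hn
  calc bernsteinApprox n id
      = Polynomial.C (n : ℝ)⁻¹ *
          ∑ k ∈ Finset.range (n + 1), k • bernsteinPolynomial ℝ n k := by
        rw [bernsteinApprox, Finset.mul_sum]
        refine Finset.sum_congr rfl fun k _ => ?_
        rw [id, div_eq_inv_mul, Polynomial.C_mul, Polynomial.C_eq_natCast, nsmul_eq_mul, mul_assoc]
    _ = Polynomial.X := by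
        rw [bernsteinPolynomial.sum_smul, nsmul_eq_mul, ← mul_assoc, ← Polynomial.C_eq_natCast,
          ← Polynomial.C_mul, inv_mul_cancel₀ hn', Polynomial.C_1, one_mul]

lemma eval_zero_bernsteinApprox (n : ℕ) (g : ℝ → ℝ) : (bernsteinApprox n g).eval 0 = g 0 := by
  simp [bernsteinApprox, Polynomial.eval_finsetSum, bernsteinPolynomial.eval_at_0]

lemma eval_one_bernsteinApprox {n : ℕ} (hn : n ≠ 0) (g : ℝ → ℝ) :
    (bernsteinApprox n g).eval 1 = g 1 := by
  simp [bernsteinApprox, Polynomial.eval_finsetSum, bernsteinPolynomial.eval_at_1, hn]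

-- In each of `n` trials a uniform point of `[0, 1]` is drawn; `#p.1` counts the points below `y₁`,
-- and `#p.2` those above `y₂`.
lemma eval_bernsteinApprox_sub (n : ℕ) (g : ℝ → ℝ) (y₁ y₂ : ℝ) :
    (bernsteinApprox n g).eval y₂ - (bernsteinApprox n g).eval y₁ =
      ∑ p ∈ disjointPairs (Fin n), trinomialWeight y₁ (1 - y₂) (y₂ - y₁) p *
        (g ((n - #p.2 : ℕ) / n) - g (#p.1 / n)) := by
  have hfst := sum_trinomialWeight_mul_fst (ι := Fin n) y₁ (1 - y₂) (y₂ - y₁) fun k => g (k / n)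
  have hsnd := sum_trinomialWeight_mul_snd (ι := Fin n) y₁ (1 - y₂) (y₂ - y₁)
    fun k => g ((n - k : ℕ) / n)
  rw [Fintype.card_fin] at hfst hsnd
  simp only [mul_sub, Finset.sum_sub_distrib]
  rw [hfst, hsnd, eval_bernsteinApprox, eval_bernsteinApprox, sub_add_sub_cancel,
    add_sub_cancel, ← Finset.sum_flip]
  congr 1
  refine Finset.sum_congr rfl fun k hk => ?_
  have hk : k ≤ n := Finset.mem_range_succ_iff.1 hk
  rw [Nat.choose_symm hk, Nat.sub_sub_self hk, mul_comm (y₂ ^ _)]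

lemma le_eval_bernsteinApprox_sub {ω g : ℝ → ℝ} (hω : ConvexOn ℝ unitInterval ω)
    (hg : ∀ a ∈ unitInterval, ∀ b ∈ unitInterval, a ≤ b → ω (b - a) ≤ g b - g a)
    {n : ℕ} (hn : n ≠ 0) {y₁ y₂ : ℝ} (h₁ : 0 ≤ y₁) (h₁₂ : y₁ ≤ y₂) (h₂ : y₂ ≤ 1) :
    ω (y₂ - y₁) ≤ (bernsteinApprox n g).eval y₂ - (bernsteinApprox n g).eval y₁ := by
  set w := trinomialWeight (ι := Fin n) y₁ (1 - y₂) (y₂ - y₁)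
  let a (p : Finset (Fin n) × Finset (Fin n)) : ℝ := #p.1 / n
  let b (p : Finset (Fin n) × Finset (Fin n)) : ℝ := (n - #p.2 : ℕ) / n
  have hw (p) : 0 ≤ w p := trinomialWeight_nonneg h₁ (sub_nonneg.2 h₂) (sub_nonneg.2 h₁₂) p
  have hw_sum : ∑ p ∈ disjointPairs (Fin n), w p = 1 := by
    rw [sum_trinomialWeight]
    ring
  have ha {p} (hp : p ∈ disjointPairs (Fin n)) : a p ∈ unitInterval := by
    have := card_add_card_le_of_mem_disjointPairs hp
    rw [Fintype.card_fin] at this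
    exact natCast_div_mem_unitInterval (by omega)
  have hb (p) : b p ∈ unitInterval := natCast_div_mem_unitInterval (Nat.sub_le ..)
  have hab {p} (hp : p ∈ disjointPairs (Fin n)) : a p ≤ b p := by
    have := card_add_card_le_of_mem_disjointPairs hp
    rw [Fintype.card_fin] at this
    exact div_le_div_of_nonneg_right (Nat.cast_le.2 (by omega)) n.cast_nonneg
  have hmean : ∑ p ∈ disjointPairs (Fin n), w p * (b p - a p) = y₂ - y₁ := by
    have := eval_bernsteinApprox_sub n id y₁ y₂
    rw [bernsteinApprox_id hn, Polynomial.eval_X, Polynomial.eval_X] at this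
    exact this.symm
  calc ω (y₂ - y₁) = ω (∑ p ∈ disjointPairs (Fin n), w p • (b p - a p)) := by
        simp only [smul_eq_mul, hmean]
    _ ≤ ∑ p ∈ disjointPairs (Fin n), w p • ω (b p - a p) :=
        hω.map_sum_le (fun p _ => hw p) hw_sum fun p hp =>
          ⟨sub_nonneg.2 (hab hp), by linarith [(ha hp).1, (hb p).2]⟩
    _ ≤ ∑ p ∈ disjointPairs (Fin n), w p * (g (b p) - g (a p)) :=
        Finset.sum_le_sum fun p hp =>
          mul_le_mul_of_nonneg_left (hg _ (ha hp) _ (hb p) (hab hp)) (hw p)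
    _ = _ := (eval_bernsteinApprox_sub n g y₁ y₂).symm

lemma abs_eval_bernsteinApprox_sub_le {ω g : ℝ → ℝ} (hω : ConcaveOn ℝ unitInterval ω)
    (hg : ∀ a ∈ unitInterval, ∀ b ∈ unitInterval, a ≤ b → |g b - g a| ≤ ω (b - a))
    {n : ℕ} (hn : n ≠ 0) {y₁ y₂ : ℝ} (h₁ : 0 ≤ y₁) (h₁₂ : y₁ ≤ y₂) (h₂ : y₂ ≤ 1) :
    |(bernsteinApprox n g).eval y₂ - (bernsteinApprox n g).eval y₁| ≤ ω (y₂ - y₁) := by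
  have hlower := le_eval_bernsteinApprox_sub hω.neg
    (fun a ha b hb hab => (abs_le.1 (hg a ha b hb hab)).1) hn h₁ h₁₂ h₂
  have hupper := le_eval_bernsteinApprox_sub (g := -g) hω.neg
    (fun a ha b hb hab => by
      simp only [Pi.neg_apply]
      linarith [le_of_abs_le (hg a ha b hb hab)]) hn h₁ h₁₂ h₂
  simp only [bernsteinApprox_neg, Polynomial.eval_neg, Pi.neg_apply] at hlower hupper
  exact abs_le.2 ⟨hlower, by linarith⟩

lemma monotoneOn_eval_bernsteinApprox {g : ℝ → ℝ} (hg : MonotoneOn g unitInterval) {n : ℕ}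
    (hn : n ≠ 0) : MonotoneOn (fun y => (bernsteinApprox n g).eval y) unitInterval :=
  fun _ h₁ _ h₂ h₁₂ => sub_nonneg.1 <|
    le_eval_bernsteinApprox_sub (convexOn_const 0 (convex_Icc 0 1))
      (fun _ ha _ hb hab => sub_nonneg.2 (hg ha hb hab)) hn h₁.1 h₁₂ h₂.2

lemma hasDerivWithinAt_eval_bernsteinApprox {f f' : ℝ → ℝ → ℝ} {s : Set ℝ} {x : ℝ}
    (hf : ∀ t ∈ unitInterval, HasDerivWithinAt (fun x' => f x' t) (f' x t) s x) (n : ℕ) (y : ℝ) :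
    HasDerivWithinAt (fun x' => (bernsteinApprox n (f x')).eval y)
      ((bernsteinApprox n (f' x)).eval y) s x := by
  simp only [eval_bernsteinApprox]
  exact HasDerivWithinAt.fun_sum fun k hk =>
    ((hf _ (natCast_div_mem_unitInterval (Finset.mem_range_succ_iff.1 hk))).const_mul _).const_mul _

variable {X : Type*} [TopologicalSpace X]

lemma continuousOn_eval_bernsteinApprox {u : X → ℝ → ℝ} {K : Set X}
    (hu : ∀ t ∈ unitInterval, ContinuousOn (fun x => u x t) K) (n : ℕ) :
    ContinuousOn (fun p : X × ℝ => (bernsteinApprox n (u p.1)).eval p.2) (K ×ˢ univ) := by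
  simp only [eval_bernsteinApprox]
  refine continuousOn_finsetSum _ fun k hk => continuousOn_const.mul (.mul (by fun_prop) ?_)
  exact (hu _ (natCast_div_mem_unitInterval (Finset.mem_range_succ_iff.1 hk))).comp
    continuousOn_fst fun p hp => hp.1

-- The parameter is absorbed in the codomain: Bernstein approximation in `C(K, ℝ)`.
lemma tendstoUniformlyOn_eval_bernsteinApprox {u : X → ℝ → ℝ} {K : Set X} (hK : IsCompact K)
    (hu : ContinuousOn (fun p : X × ℝ => u p.1 p.2) (K ×ˢ unitInterval)) :
    TendstoUniformlyOn (fun n (p : X × ℝ) => (bernsteinApprox n (u p.1)).eval p.2)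
      (fun p => u p.1 p.2) atTop (K ×ˢ unitInterval) := by
  have : CompactSpace K := isCompact_iff_compactSpace.1 hK
  let U : C(unitInterval × K, ℝ) := ⟨fun q => u q.2 q.1,
    hu.comp_continuous (f := fun q : unitInterval × K => ((q.2 : X), (q.1 : ℝ))) (by fun_prop)
      fun q => ⟨q.2.2, q.1.2⟩⟩
  rw [Metric.tendstoUniformlyOn_iff]
  intro ε hε
  filter_upwards [Metric.tendsto_nhds.1 (bernsteinApproximation_uniform U.curry) ε hε]
    with n hn p ⟨hx, hy⟩
  have hdist := (ContinuousMap.dist_lt_iff hε).1 ((ContinuousMap.dist_lt_iff hε).1 hn ⟨p.2, hy⟩)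
    ⟨p.1, hx⟩
  have heval : bernsteinApproximation n U.curry ⟨p.2, hy⟩ ⟨p.1, hx⟩ =
      (bernsteinApprox n (u p.1)).eval p.2 := by
    rw [bernsteinApproximation.apply, eval_bernsteinApprox, Finset.sum_range,
      ContinuousMap.sum_apply]
    refine Finset.sum_congr rfl fun k _ => ?_
    have hnode : U.curry (bernstein.z k) ⟨p.1, hx⟩ = u p.1 (k / n) := by
      simp only [U, ContinuousMap.curry_apply, ContinuousMap.coe_mk, bernstein.z]
    rw [ContinuousMap.smul_apply, bernstein_apply, smul_eq_mul, hnode]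
    simp only [mul_assoc]
  rw [heval, dist_comm] at hdist
  exact hdist

end Bernstein

section Holder

variable {C γ : ℝ} {f : ℝ → ℝ → ℝ} {x y₁ y₂ : ℝ}

lemma BiHolderUpper.abs_sub_le (hf : BiHolderUpper C γ f) (hγ : γ ≠ 0) (hx : x ∈ unitInterval)
    (h₁ : y₁ ∈ unitInterval) (h₂ : y₂ ∈ unitInterval) :
    |f x y₂ - f x y₁| ≤ C * |y₂ - y₁| ^ γ := by
  obtain rfl | hne := eq_or_ne y₁ y₂
  · simp [Real.zero_rpow hγ]
  · exact hf x hx y₁ h₁ y₂ h₂ hne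

lemma BiHolderUpper.continuousOn (hf : BiHolderUpper C γ f) (hγ : 0 < γ) (hx : x ∈ unitInterval) :
    ContinuousOn (f x) unitInterval := by
  intro y hy
  have hlim : Tendsto (fun y' => C * |y' - y| ^ γ) (𝓝[unitInterval] y) (𝓝 0) := by
    have hcont : Continuous fun y' => C * |y' - y| ^ γ :=
      continuous_const.mul (.rpow_const (by fun_prop) fun _ => .inr hγ.le)
    simpa [Real.zero_rpow hγ.ne'] using (hcont.tendsto y).mono_left nhdsWithin_le_nhds
  refine tendsto_iff_dist_tendsto_zero.2 (squeeze_zero' (.of_forall fun _ => dist_nonneg) ?_ hlim)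
  filter_upwards [self_mem_nhdsWithin] with y' hy'
  exact hf.abs_sub_le hγ.ne' hx hy hy'

lemma BiHolderLower.le_abs_sub (hf : BiHolderLower C γ f) (hγ : γ ≠ 0) (hx : x ∈ unitInterval)
    (h₁ : y₁ ∈ unitInterval) (h₂ : y₂ ∈ unitInterval) :
    C⁻¹ * |y₂ - y₁| ^ (1 / γ) ≤ |f x y₂ - f x y₁| := by
  obtain rfl | hne := eq_or_ne y₁ y₂
  · simp [Real.zero_rpow (inv_ne_zero hγ)]
  · exact hf x hx y₁ h₁ y₂ h₂ hne

lemma BiHolderLower.abs_sub_le_rpow (hf : BiHolderLower C γ f) (hC : 0 < C) (hγ : 0 < γ)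
    (hx : x ∈ unitInterval) (h₁ : y₁ ∈ unitInterval) (h₂ : y₂ ∈ unitInterval) :
    |y₂ - y₁| ≤ (C * |f x y₂ - f x y₁|) ^ γ := by
  have := hf.le_abs_sub hγ.ne' hx h₁ h₂
  rwa [inv_mul_le_iff₀ hC, one_div,
    Real.rpow_inv_le_iff_of_pos (abs_nonneg _) (by positivity) hγ] at this

lemma BiHolderLower.injOn (hf : BiHolderLower C γ f) (hC : 0 < C) (hγ : 0 < γ)
    (hx : x ∈ unitInterval) : InjOn (f x) unitInterval := by
  intro y₁ h₁ y₂ h₂ heq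
  have := hf.abs_sub_le_rpow hC hγ hx h₁ h₂
  rw [heq, sub_self, abs_zero, mul_zero, Real.zero_rpow hγ.ne'] at this
  exact (sub_eq_zero.1 (abs_nonpos_iff.1 this)).symm

lemma BiHolderUpper.bernstein (hf : BiHolderUpper C γ f) (hC : 0 ≤ C) (hγ : 0 < γ) (hγ₁ : γ ≤ 1)
    {n : ℕ} (hn : n ≠ 0) : BiHolderUpper C γ fun x y => (bernsteinApprox n (f x)).eval y := by
  have hconcave : ConcaveOn ℝ unitInterval fun d => C * d ^ γ :=
    ((Real.concaveOn_rpow hγ.le hγ₁).smul hC).subset Icc_subset_Ici_self (convex_Icc 0 1)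
  intro x hx y₁ h₁ y₂ h₂ hne
  wlog h : y₁ ≤ y₂ generalizing y₁ y₂
  · rw [abs_sub_comm y₂, abs_sub_comm (Polynomial.eval y₂ _)]
    exact this y₂ h₂ y₁ h₁ hne.symm (le_of_not_ge h)
  rw [abs_of_nonneg (sub_nonneg.2 h)]
  refine abs_eval_bernsteinApprox_sub_le hconcave (fun a ha b hb hab => ?_) hn h₁.1 h h₂.2
  rw [← abs_of_nonneg (sub_nonneg.2 hab)]
  exact hf.abs_sub_le hγ.ne' hx ha hb

lemma BiHolderLower.bernstein (hf : BiHolderLower C γ f)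
    (hmono : ∀ x ∈ unitInterval, MonotoneOn (f x) unitInterval) (hC : 0 ≤ C) (hγ : 0 < γ)
    (hγ₁ : γ ≤ 1) {n : ℕ} (hn : n ≠ 0) :
    BiHolderLower C γ fun x y => (bernsteinApprox n (f x)).eval y := by
  have hconvex : ConvexOn ℝ unitInterval fun d => C⁻¹ * d ^ (1 / γ) :=
    ((convexOn_rpow ((one_le_div hγ).2 hγ₁)).smul (inv_nonneg.2 hC)).subset
      Icc_subset_Ici_self (convex_Icc 0 1)
  intro x hx y₁ h₁ y₂ h₂ hne
  wlog h : y₁ ≤ y₂ generalizing y₁ y₂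
  · rw [abs_sub_comm y₂, abs_sub_comm (Polynomial.eval y₂ _)]
    exact this y₂ h₂ y₁ h₁ hne.symm (le_of_not_ge h)
  rw [abs_of_nonneg (sub_nonneg.2 h)]
  refine (le_eval_bernsteinApprox_sub hconvex (fun a ha b hb hab => ?_) hn h₁.1 h h₂.2).trans
    (le_abs_self _)
  have := hf.le_abs_sub hγ.ne' hx ha hb
  rwa [abs_of_nonneg (sub_nonneg.2 hab), abs_of_nonneg (sub_nonneg.2 (hmono x hx ha hb hab))]
    at this

end Holder

namespace IsFol

variable {C γ : ℝ} {f fx g gx : ℝ → ℝ → ℝ} {x y z z₁ z₂ ε : ℝ}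

lemma one_le (hf : IsFol C γ f fx) : 1 ≤ C := by
  have := hf.upper 0 unitInterval.zero_mem 0 unitInterval.zero_mem 1 unitInterval.one_mem
    zero_ne_one
  simpa [hf.eq_id, unitInterval.zero_mem, unitInterval.one_mem] using this

lemma pos (hf : IsFol C γ f fx) : 0 < C := zero_lt_one.trans_le hf.one_le

lemma monotoneOn (hf : IsFol C γ f fx) (hγ : 0 < γ) (hx : x ∈ unitInterval) :
    MonotoneOn (f x) unitInterval :=
  (ContinuousOn.strictMonoOn_of_injOn_Icc zero_le_one
    (by rw [hf.eq_bot x hx, hf.eq_top x hx]; exact zero_le_one)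
    (hf.upper.continuousOn hγ hx) (hf.lower.injOn hf.pos hγ hx)).monotoneOn

lemma surjOn (hf : IsFol C γ f fx) (hγ : 0 < γ) (hx : x ∈ unitInterval) :
    SurjOn (f x) unitInterval unitInterval := by
  have := intermediate_value_Icc zero_le_one (hf.upper.continuousOn hγ hx)
  rwa [hf.eq_bot x hx, hf.eq_top x hx] at this

lemma hinv_mem (hf : IsFol C γ f fx) (hγ : 0 < γ) (hx : x ∈ unitInterval) (hz : z ∈ unitInterval) :
    hinv f x z ∈ unitInterval :=
  (hf.surjOn hγ hx).mapsTo_invFunOn hz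

lemma apply_hinv (hf : IsFol C γ f fx) (hγ : 0 < γ) (hx : x ∈ unitInterval)
    (hz : z ∈ unitInterval) : f x (hinv f x z) = z :=
  (hf.surjOn hγ hx).rightInvOn_invFunOn hz

lemma abs_hinv_sub_le (hf : IsFol C γ f fx) (hγ : 0 < γ) (hx : x ∈ unitInterval)
    (hz : z ∈ unitInterval) (hy : y ∈ unitInterval) :
    |hinv f x z - y| ≤ (C * |z - f x y|) ^ γ := by
  have := hf.lower.abs_sub_le_rpow hf.pos hγ hx hy (hf.hinv_mem hγ hx hz)
  rwa [hf.apply_hinv hγ hx hz] at this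

lemma abs_hinv_sub_hinv_le (hf : IsFol C γ f fx) (hγ : 0 < γ) (hx : x ∈ unitInterval)
    (h₁ : z₁ ∈ unitInterval) (h₂ : z₂ ∈ unitInterval) :
    |hinv f x z₂ - hinv f x z₁| ≤ C ^ γ * |z₂ - z₁| ^ γ := by
  have := hf.abs_hinv_sub_le hγ hx h₂ (hf.hinv_mem hγ hx h₁)
  rwa [hf.apply_hinv hγ hx h₁, Real.mul_rpow hf.pos.le (abs_nonneg _)] at this

lemma abs_hinv_sub_hinv_le_of_abs_sub_le (hg : IsFol C γ g gx) (hf : IsFol C γ f fx) (hγ : 0 < γ)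
    (hx : x ∈ unitInterval) (hfg : ∀ y ∈ unitInterval, |g x y - f x y| ≤ ε)
    (hz : z ∈ unitInterval) : |hinv g x z - hinv f x z| ≤ (C * ε) ^ γ := by
  have hmem := hf.hinv_mem hγ hx hz
  have hclose : |z - g x (hinv f x z)| ≤ ε := by
    have := hfg _ hmem
    rwa [hf.apply_hinv hγ hx hz, abs_sub_comm] at this
  have := hf.pos
  exact (hg.abs_hinv_sub_le hγ hx hz hmem).trans (by gcongr)

lemma abs_sub_le_of_abs_deriv_sub_le (hg : IsFol C γ g gx) (hf : IsFol C γ f fx)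
    (hy : y ∈ unitInterval) (hfg : ∀ x ∈ unitInterval, |gx x y - fx x y| ≤ ε)
    (hx : x ∈ unitInterval) : |g x y - f x y| ≤ ε := by
  have hε : 0 ≤ ε := (abs_nonneg _).trans (hfg x hx)
  have hmean := (convex_Icc 0 1).norm_image_sub_le_of_norm_hasDerivWithin_le
    (fun t ht => (hg.hasDeriv y hy t ht).sub (hf.hasDeriv y hy t ht)) hfg unitInterval.zero_mem hx
  simp only [Pi.sub_apply, hg.eq_id y hy, hf.eq_id y hy, sub_self, sub_zero, Real.norm_eq_abs,
    abs_of_nonneg hx.1] at hmean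
  exact hmean.trans (mul_le_of_le_one_right hε hx.2)

lemma bernstein (hf : IsFol C γ f fx) (hγ : 0 < γ) (hγ₁ : γ ≤ 1) {n : ℕ} (hn : n ≠ 0) :
    IsFol C γ (fun x y => (bernsteinApprox n (f x)).eval y)
      (fun x y => (bernsteinApprox n (fx x)).eval y) where
  mapsTo x hx y hy := by
    have hmono := monotoneOn_eval_bernsteinApprox (hf.monotoneOn hγ hx) hn
    have hbot := hmono unitInterval.zero_mem hy hy.1
    have htop := hmono hy unitInterval.one_mem hy.2
    simp only [eval_zero_bernsteinApprox, hf.eq_bot x hx] at hbot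
    simp only [eval_one_bernsteinApprox hn, hf.eq_top x hx] at htop
    exact ⟨hbot, htop⟩
  hasDeriv y _ x hx :=
    hasDerivWithinAt_eval_bernsteinApprox (fun t ht => hf.hasDeriv t ht x hx) n y
  derivCont := by
    refine (continuousOn_eval_bernsteinApprox (fun t ht => ?_) n).mono
      (prod_mono_right (subset_univ _))
    exact hf.derivCont.comp (f := fun x => (x, t)) (by fun_prop) fun x hx => ⟨hx, ht⟩
  eq_id y _ := by
    have hid : EqOn (f 0) id unitInterval := hf.eq_id
    rw [bernsteinApprox_congr hid, bernsteinApprox_id hn, Polynomial.eval_X]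
  eq_bot x hx := by rw [eval_zero_bernsteinApprox, hf.eq_bot x hx]
  eq_top x hx := by rw [eval_one_bernsteinApprox hn, hf.eq_top x hx]
  lower := hf.lower.bernstein (fun _ hx => hf.monotoneOn hγ hx) hf.pos.le hγ hγ₁ hn
  upper := hf.upper.bernstein hf.pos.le hγ hγ₁ hn

end IsFol

/-- The element of `F_(C,γ)` obtained from `F` by Bernstein approximation in the second
variable. -/
def Fol.bernstein {C γ : ℝ} (F : Fol C γ) (hγ : 0 < γ) (hγ₁ : γ ≤ 1) {n : ℕ} (hn : n ≠ 0) :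
    Fol C γ where
  f x y := (bernsteinApprox n (F.f x)).eval y
  fx x y := (bernsteinApprox n (F.fx x)).eval y
  isFol := F.isFol.bernstein hγ hγ₁ hn

section Distance

lemma le_rpow_mul_rpow {t u v θ : ℝ} (ht : 0 ≤ t) (htu : t ≤ u) (htv : t ≤ v) (hθ₀ : 0 ≤ θ)
    (hθ₁ : θ ≤ 1) : t ≤ u ^ (1 - θ) * v ^ θ :=
  calc t = t ^ (1 - θ) * t ^ θ := by
        rw [← Real.rpow_add_of_nonneg ht (sub_nonneg.2 hθ₁) hθ₀, sub_add_cancel, Real.rpow_one]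
    _ ≤ u ^ (1 - θ) * v ^ θ := by
        have := sub_nonneg.2 hθ₁
        have := ht.trans htu
        gcongr

lemma holDist_le {α β K ε : ℝ} {h k : ℝ → ℝ} (hα : 0 ≤ α) (hαβ : α < β) (hK : 0 ≤ K) (hε : 0 ≤ ε)
    (hhk : ∀ y ∈ unitInterval, |h y - k y| ≤ ε)
    (hh : ∀ y₁ ∈ unitInterval, ∀ y₂ ∈ unitInterval, y₁ ≠ y₂ → |h y₂ - h y₁| ≤ K * |y₂ - y₁| ^ β)
    (hk : ∀ y₁ ∈ unitInterval, ∀ y₂ ∈ unitInterval, y₁ ≠ y₂ → |k y₂ - k y₁| ≤ K * |y₂ - y₁| ^ β) :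
    holDist α h k ≤ (2 * ε) ^ (1 - α / β) * (2 * K) ^ (α / β) := by
  have hβ : 0 < β := hα.trans_lt hαβ
  refine Real.sSup_le ?_ (by positivity)
  rintro r ⟨y₁, h₁, y₂, h₂, hne, rfl⟩
  have hy : 0 < |y₂ - y₁| := abs_pos.2 (sub_ne_zero.2 hne.symm)
  have hunif : |(h y₂ - k y₂) - (h y₁ - k y₁)| ≤ 2 * ε :=
    (abs_sub _ _).trans (by linarith [hhk y₁ h₁, hhk y₂ h₂])
  have hholder : |(h y₂ - k y₂) - (h y₁ - k y₁)| ≤ 2 * K * |y₂ - y₁| ^ β := by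
    rw [sub_sub_sub_comm]
    exact (abs_sub _ _).trans (by linarith [hh y₁ h₁ y₂ h₂ hne, hk y₁ h₁ y₂ h₂ hne])
  rw [div_le_iff₀ (by positivity)]
  calc |(h y₂ - k y₂) - (h y₁ - k y₁)|
      ≤ (2 * ε) ^ (1 - α / β) * (2 * K * |y₂ - y₁| ^ β) ^ (α / β) :=
        le_rpow_mul_rpow (abs_nonneg _) hunif hholder (by positivity) ((div_le_one hβ).2 hαβ.le)
    _ = (2 * ε) ^ (1 - α / β) * (2 * K) ^ (α / β) * |y₂ - y₁| ^ α := by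
        rw [Real.mul_rpow (x := 2 * K) (by positivity) (by positivity), ← Real.rpow_mul hy.le,
          mul_div_cancel₀ _ hβ.ne', mul_assoc]

lemma C0dist_le {u v : ℝ → ℝ → ℝ} {ε : ℝ} (hε : 0 ≤ ε)
    (huv : ∀ x ∈ unitInterval, ∀ y ∈ unitInterval, |u x y - v x y| ≤ ε) : C0dist u v ≤ ε :=
  Real.sSup_le (by rintro r ⟨x, hx, y, hy, rfl⟩; exact huv x hx y hy) hε

/-- An upper bound for `d_α` on `F_(C,β)` in terms of a `C⁰` bound `ε` on the difference of the
`x`-derivatives. The two entries of the maximum come from the holonomies and their inverses. -/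
def dalphaModulus (C β α ε : ℝ) : ℝ :=
  ε + ε + max ((2 * ε) ^ (1 - α / β) * (2 * C) ^ (α / β))
    ((2 * (C * ε) ^ β) ^ (1 - α / β) * (2 * C ^ β) ^ (α / β))

variable {C β α : ℝ}

lemma tendsto_dalphaModulus (hα : 0 ≤ α) (hαβ : α < β) :
    Tendsto (dalphaModulus C β α) (𝓝 0) (𝓝 0) := by
  have hβ : 0 < β := hα.trans_lt hαβ
  have hθ : 0 < 1 - α / β := sub_pos.2 ((div_lt_one hβ).2 hαβ)
  have hcont : Continuous (dalphaModulus C β α) := by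
    refine (continuous_id.add continuous_id).add (.max ?_ ?_) <;>
      refine .mul (.rpow_const ?_ fun _ => .inr hθ.le) continuous_const
    · fun_prop
    · exact continuous_const.mul (.rpow_const (by fun_prop) fun _ => .inr hβ.le)
  simpa [dalphaModulus, Real.zero_rpow hθ.ne', Real.zero_rpow hβ.ne'] using hcont.tendsto 0

lemma dalphaF_le_dalphaModulus (hα : 0 ≤ α) (hαβ : α < β) {F G : Fol C β} {ε : ℝ} (hε : 0 ≤ ε)
    (hderiv : ∀ x ∈ unitInterval, ∀ y ∈ unitInterval, |G.fx x y - F.fx x y| ≤ ε) :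
    dalphaF α G F ≤ dalphaModulus C β α ε := by
  have hβ : 0 < β := hα.trans_lt hαβ
  have hC : 0 < C := F.isFol.pos
  have hclose : ∀ x ∈ unitInterval, ∀ y ∈ unitInterval, |G.f x y - F.f x y| ≤ ε :=
    fun x hx y hy => G.isFol.abs_sub_le_of_abs_deriv_sub_le F.isFol hy
      (fun t ht => hderiv t ht y hy) hx
  refine add_le_add (add_le_add (C0dist_le hε hclose) (C0dist_le hε hderiv))
    (Real.sSup_le ?_ (le_max_of_le_left (by positivity)))
  rintro r ⟨x, hx, rfl⟩
  refine max_le_max ?_ ?_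
  · exact holDist_le hα hαβ hC.le hε (hclose x hx) (G.isFol.upper x hx) (F.isFol.upper x hx)
  · exact holDist_le hα hαβ (by positivity) (by positivity)
      (fun z hz => G.isFol.abs_hinv_sub_hinv_le_of_abs_sub_le F.isFol hβ hx (hclose x hx) hz)
      (fun _ h₁ _ h₂ _ => G.isFol.abs_hinv_sub_hinv_le hβ hx h₁ h₂)
      (fun _ h₁ _ h₂ _ => F.isFol.abs_hinv_sub_hinv_le hβ hx h₁ h₂)

end Distance

theorem stmt11_general {C β α : ℝ} (hα : 0 ≤ α) (hαβ : α < β) (hβ : β ≤ 1) :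
    IsDenseWrt (dalphaF (C := C) (γ := β) α)
      {F | ∀ x, ∃ p : ℝ[X], F.f x = fun y => p.eval y} := by
  intro F ξ hξ
  obtain ⟨ε, hsmall, hε⟩ : ∃ ε, dalphaModulus C β α ε < ξ ∧ 0 < ε :=
    ((((tendsto_dalphaModulus hα hαβ).eventually_lt_const hξ).filter_mono nhdsWithin_le_nhds).and
      (self_mem_nhdsWithin (s := Ioi 0))).exists
  have hunif := tendstoUniformlyOn_eval_bernsteinApprox isCompact_Icc F.isFol.derivCont
  obtain ⟨n, hclose, hn⟩ :=
    ((Metric.tendstoUniformlyOn_iff.1 hunif ε hε).and (eventually_ne_atTop 0)).exists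
  refine ⟨F.bernstein (hα.trans_lt hαβ) hβ hn, fun x => ⟨_, rfl⟩,
    (dalphaF_le_dalphaModulus hα hαβ hε.le fun x hx y hy => ?_).trans_lt hsmall⟩
  rw [abs_sub_comm]
  exact (hclose (x, y) ⟨hx, hy⟩).le

/-- For every `f ∈ F_(C,β)` and `ξ > 0` there exists `f₂ ∈ F_(C,β)` which is
`C²` in the second variable with `d_α(f₂, f) < ξ/3`; in particular such elements are dense. -/
theorem stmt11 (C β α : ℝ) (hC : 1 < C) (hα : 0 ≤ α) (hαβ : α < β) (hβ : β < 1)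
    (F : Fol C β) (ξ : ℝ) (hξ : 0 < ξ) :
    ∃ F₂ : Fol C β, (∀ x ∈ unitInterval, ContDiffOn ℝ 2 (F₂.f x) unitInterval) ∧
      dalphaF α F₂ F < ξ / 3 := by
  obtain ⟨F₂, hpoly, hd⟩ := stmt11_general hα hαβ hβ.le F (ξ / 3) (by positivity)
  exact ⟨F₂, fun x _ => let ⟨p, hp⟩ := hpoly x; hp ▸ (p.contDiff_aeval 2).contDiffOn, hd⟩

end
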